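/- arXiv:1906.09541 — 2 statements merged into one kernel-verified Lean document; each statement's English description precedes it below -/
import Mathlib

section
/- Let a be a channel and let Ω_{½a} = μX.(½τ.a.0 ⊕ ½τ.X). Then the equivalence closure of the single pair {(Ω_{½a}, a.0)} is a codivergent branching bisimulation on P_RCCS; in particular Ω_{½a} =_RCCS a.0. -/
/-!
Formalization of RCCS (Randomized CCS) following the paper
"A Uniform Framework for Probabilistic Process Models".
Channels form a type `Chan`; terms use de Bruijn indices for process variables.
-/

noncomputable section
open scoped Classical

/-- RCCS terms over a set of channels, with de Bruijn process variables.
`sum n α T` is the nondeterministic choice `Σ_{i∈[n]} α_i.T_i` (guards are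
names `Sum.inl a` or conames `Sum.inr a`); `rand n p T` is the random choice
`⊕_{i∈[n]} p_i τ.T_i`; `par` is composition, `loc a T` is localization `(a)T`,
and `fix T` is the fixpoint `μX.T`. -/
inductive Tm (Chan : Type) : Type
  | var : ℕ → Tm Chan
  | sum : (n : ℕ) → (Fin n → Chan ⊕ Chan) → (Fin n → Tm Chan) → Tm Chan
  | rand : (n : ℕ) → (Fin n → ℝ) → (Fin n → Tm Chan) → Tm Chan
  | par : Tm Chan → Tm Chan → Tm Chan
  | loc : Chan → Tm Chan → Tm Chan
  | fix : Tm Chan → Tm Chan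

variable {Chan : Type}

/-- Labels: names, conames, and `tau p` for `p ∈ (0,1]`; `tau 1` is the plain
silent action `τ`, identified with `1τ`. -/
inductive Lab (Chan : Type) : Type
  | name : Chan → Lab Chan
  | coname : Chan → Lab Chan
  | tau : ℝ → Lab Chan

/-- The label of an external prefix. -/
def guardLab : Chan ⊕ Chan → Lab Chan
  | .inl a => .name a
  | .inr a => .coname a

/-- A label is an action in `Act` if it is a name, a coname, or `τ = 1τ`. -/
def Lab.IsAct : Lab Chan → Prop
  | .name _ => True
  | .coname _ => True
  | .tau p => p = 1

/-- Shift de Bruijn indices `≥ c` up by one. -/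
def Tm.lift : ℕ → Tm Chan → Tm Chan
  | c, .var n => .var (if n < c then n else n + 1)
  | c, .sum n α T => .sum n α fun i => Tm.lift c (T i)
  | c, .rand n p T => .rand n p fun i => Tm.lift c (T i)
  | c, .par S T => .par (Tm.lift c S) (Tm.lift c T)
  | c, .loc a T => .loc a (Tm.lift c T)
  | c, .fix T => .fix (Tm.lift (c + 1) T)

/-- Capture-avoiding substitution of the term `S` for variable `c`
(other variables above `c` are shifted down). -/
def Tm.inst : ℕ → Tm Chan → Tm Chan → Tm Chan
  | c, S, .var n => if n < c then .var n else if n = c then S else .var (n - 1)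
  | c, S, .sum n α T => .sum n α fun i => Tm.inst c S (T i)
  | c, S, .rand n p T => .rand n p fun i => Tm.inst c S (T i)
  | c, S, .par S' T => .par (Tm.inst c S S') (Tm.inst c S T)
  | c, S, .loc a T => .loc a (Tm.inst c S T)
  | c, S, .fix T => .fix (Tm.inst (c + 1) (Tm.lift 0 S) T)

/-- All free variables are `< k`. -/
def Tm.ClosedAt : ℕ → Tm Chan → Prop
  | k, .var n => n < k
  | k, .sum _ _ T => ∀ i, Tm.ClosedAt k (T i)
  | k, .rand _ _ T => ∀ i, Tm.ClosedAt k (T i)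
  | k, .par S T => Tm.ClosedAt k S ∧ Tm.ClosedAt k T
  | k, .loc _ T => Tm.ClosedAt k T
  | k, .fix T => Tm.ClosedAt (k + 1) T

/-- Variable `v` is guarded: every free occurrence of `v` is under a prefix. -/
def Tm.Guarded : ℕ → Tm Chan → Prop
  | v, .var n => n ≠ v
  | _, .sum _ _ _ => True
  | _, .rand _ _ _ => True
  | v, .par S T => Tm.Guarded v S ∧ Tm.Guarded v T
  | v, .loc _ T => Tm.Guarded v T
  | v, .fix T => Tm.Guarded (v + 1) T

/-- Well-formedness: in every random choice `⊕_{i∈I} p_i τ.T_i` we have `|I| ≥ 2`,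
`p_i ∈ (0,1)` and `Σ_i p_i = 1`; in every fixpoint `μX.T` the variable `X` is
guarded in `T`. -/
def Tm.WF : Tm Chan → Prop
  | .var _ => True
  | .sum _ _ T => ∀ i, Tm.WF (T i)
  | .rand n p T => 2 ≤ n ∧ (∀ i, 0 < p i ∧ p i < 1) ∧ (∑ i, p i) = 1 ∧ ∀ i, Tm.WF (T i)
  | .par S T => Tm.WF S ∧ Tm.WF T
  | .loc _ T => Tm.WF T
  | .fix T => Tm.Guarded 0 T ∧ Tm.WF T

/-- A term with no random choice, i.e. a CCS term. -/
def Tm.NoRand : Tm Chan → Prop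
  | .var _ => True
  | .sum _ _ T => ∀ i, Tm.NoRand (T i)
  | .rand _ _ _ => False
  | .par S T => Tm.NoRand S ∧ Tm.NoRand T
  | .loc _ T => Tm.NoRand T
  | .fix T => Tm.NoRand T

/-- The transition relation of RCCS. -/
inductive Step : Tm Chan → Lab Chan → Tm Chan → Prop
  | sum {n α T} (i : Fin n) : Step (.sum n α T) (guardLab (α i)) (T i)
  | rand {n p T} (i : Fin n) : Step (.rand n p T) (.tau (p i)) (T i)
  | comL {S S' T T' a} : Step S (.name a) S' → Step T (.coname a) T' →
      Step (.par S T) (.tau 1) (.par S' T')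
  | comR {S S' T T' a} : Step S (.coname a) S' → Step T (.name a) T' →
      Step (.par S T) (.tau 1) (.par S' T')
  | parL {S S' T l} : Step S l S' → Step (.par S T) l (.par S' T)
  | parR {S T T' l} : Step T l T' → Step (.par S T) l (.par S T')
  | loc {T T' l} (a : Chan) : Step T l T' → l ≠ .name a → l ≠ .coname a →
      Step (.loc a T) l (.loc a T')
  | fix {T T' l} : Step (Tm.inst 0 (.fix T) T) l T' → Step (.fix T) l T'

/-- Collective silent transitions `B →^{∐_{i∈[n]} p_i τ} ∐_{i∈[n]} B_i`,
arising from a single random choice and closed under composition,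
localization and recursion. -/
inductive CStep : Tm Chan → (n : ℕ) → (Fin n → ℝ) → (Fin n → Tm Chan) → Prop
  | rand {n p T} : CStep (.rand n p T) n p T
  | parL {S T n p S'} : CStep S n p S' → CStep (.par S T) n p fun i => .par (S' i) T
  | parR {S T n p T'} : CStep T n p T' → CStep (.par S T) n p fun i => .par S (T' i)
  | loc {T n p T'} (a : Chan) : CStep T n p T' → CStep (.loc a T) n p fun i => .loc a (T' i)
  | fix {T n p T'} : CStep (Tm.inst 0 (.fix T) T) n p T' → CStep (.fix T) n p T'

/-- The set `P_RCCS` of RCCS processes: closed well-formed terms. -/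
def Proc (Chan : Type) : Type := {T : Tm Chan // T.ClosedAt 0 ∧ T.WF}

/-- A (potential) silent tree: nodes are addressed by reversed lists of child
indices (the root is `[]`, the `i`-th child of `σ` is `i :: σ`); each node
carries a process label and the probability labelling its incoming edge
(the root carries `1`). -/
structure PTree (Chan : Type) where
  node : List ℕ → Option (Proc Chan × ℝ)

namespace PTree

variable (t : PTree Chan)

/-- The address `σ` is a node of the tree. -/
def hasNode (σ : List ℕ) : Prop := (t.node σ).isSome

/-- The probability labelling the incoming edge of the node at `σ`. -/
def edgeProb (σ : List ℕ) : ℝ := ((t.node σ).map Prod.snd).getD 0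

/-- The probability of the path from the root to `σ`: the product of the edge
labels along it (`1` for the empty path). -/
def pathProb (t : PTree Chan) : List ℕ → ℝ
  | [] => 1
  | i :: σ => t.edgeProb (i :: σ) * pathProb t σ

/-- `σ` is a leaf. -/
def IsLeaf (σ : List ℕ) : Prop := t.hasNode σ ∧ ¬ t.hasNode (0 :: σ)

/-- `P(t↾_k)`: the sum of the probabilities of the branches of the truncation
of `t` at depth `k` (a branch of `t↾_k` ends either at depth `k` or at a leaf
of `t` of depth `< k`). -/
def truncProb (k : ℕ) : ℝ :=
  ∑' σ : List ℕ,
    if t.hasNode σ ∧ (σ.length = k ∨ (σ.length < k ∧ ¬ t.hasNode (0 :: σ)))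
    then t.pathProb σ else 0

/-- `P^k(t)`: the sum of the probabilities of the finite branches of `t` of
length at most `k`. -/
def finBranchProb (k : ℕ) : ℝ :=
  ∑' σ : List ℕ, if t.IsLeaf σ ∧ σ.length ≤ k then t.pathProb σ else 0

/-- `t` is regular: `P^f(t) = lim_k P^k(t) = 1`. -/
def Regular : Prop := Filter.Tendsto t.finBranchProb Filter.atTop (nhds 1)

/-- `t` is divergent: `P^f(t) = lim_k P^k(t) = 0`. -/
def Divergent : Prop := Filter.Tendsto t.finBranchProb Filter.atTop (nhds 0)

end PTree

/-- `t` is a silent tree of `A`: the root is labeled `A`, the node set is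
prefix-closed with children indexed by an initial segment of `ℕ`, the tree is
finitely branching, and every edge labeled `p` from `B` to `B'` satisfies
`p ∈ (0,1]` and `B →^{pτ} B'`. -/
def IsSilentTree (A : Proc Chan) (t : PTree Chan) : Prop :=
  t.node [] = some (A, 1) ∧
  (∀ i σ, t.hasNode (i :: σ) → t.hasNode σ) ∧
  (∀ i j σ, j ≤ i → t.hasNode (i :: σ) → t.hasNode (j :: σ)) ∧
  (∀ σ, ∃ n, ∀ i, n ≤ i → ¬ t.hasNode (i :: σ)) ∧
  (∀ σ i B p B' p', t.node σ = some (B, p) → t.node (i :: σ) = some (B', p') →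
    0 < p' ∧ p' ≤ 1 ∧ Step B.val (.tau p') B'.val)

/-- An ε-tree of `A` with regard to `E`: an `E`-tree of `A` (all node labels lie
in `[A]_E`) such that (1) any edge labeled `q < 1` out of a node `B` comes from a
collective random transition whose targets are exactly the children of `B`, and
(2) an edge labeled `1` out of `B` is a transition `B →^τ B'` to the unique
child `B'` of `B`. -/
def IsETree (E : Proc Chan → Proc Chan → Prop) (A : Proc Chan) (t : PTree Chan) : Prop :=
  IsSilentTree A t ∧
  (∀ σ B p, t.node σ = some (B, p) → E A B) ∧
  (∀ σ i B p B' q, t.node σ = some (B, p) → t.node (i :: σ) = some (B', q) → q < 1 →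
    ∃ n ps Ts, CStep B.val n ps Ts ∧
      (∀ j : ℕ, t.hasNode (j :: σ) ↔ j < n) ∧
      (∀ j : Fin n, ∃ C : Proc Chan, C.val = Ts j ∧ t.node ((j : ℕ) :: σ) = some (C, ps j))) ∧
  (∀ σ i B p B', t.node σ = some (B, p) → t.node (i :: σ) = some (B', 1) →
    Step B.val (.tau 1) B'.val ∧ i = 0 ∧ ¬ t.hasNode (1 :: σ))

/-- The `E`-class of `A`. -/
def classOf (E : Proc Chan → Proc Chan → Prop) (A : Proc Chan) : Set (Proc Chan) := {B | E A B}

/-- `C` is an equivalence class of `E`. -/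
def IsClass (E : Proc Chan → Proc Chan → Prop) (C : Set (Proc Chan)) : Prop :=
  ∃ A, C = classOf E A

/-- An equivalence `E` on `P_RCCS` is codivergent if for every `E`-class either
all members have a divergent ε-tree with regard to `E` or none does. -/
def Codivergent (E : Proc Chan → Proc Chan → Prop) : Prop :=
  ∀ A B, E A B →
    ((∃ t, IsETree E A t ∧ t.Divergent) ↔ (∃ t, IsETree E B t ∧ t.Divergent))

/-- An ℓ-transition `A ⇝_E →^ℓ C`: a regular ε-tree of `A` with regard to `E`
such that every leaf `L` has a transition `L →^ℓ L'` with `L' ∈ C`. -/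
def LTrans (E : Proc Chan → Proc Chan → Prop) (A : Proc Chan) (l : Lab Chan)
    (C : Set (Proc Chan)) : Prop :=
  ∃ t, IsETree E A t ∧ t.Regular ∧
    ∀ σ L p, t.node σ = some (L, p) → ¬ t.hasNode (0 :: σ) →
      ∃ L' ∈ C, Step L.val l L'.val

/-- The raw term `T` belongs to the set `C` of processes. -/
def inC (C : Set (Proc Chan)) (T : Tm Chan) : Prop := ∃ P ∈ C, P.val = T

/-- `P(L → C)` of a collective silent transition: the sum of the `p_i` whose
target lies in `C`. -/
def collProb (C : Set (Proc Chan)) {n : ℕ} (ps : Fin n → ℝ) (Ts : Fin n → Tm Chan) : ℝ :=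
  ∑ i, if inC C (Ts i) then ps i else 0

/-- A `q`-transition `A ⇝_E →^q C`: a regular ε-tree of `A` with regard to `E`
such that every leaf has a collective silent transition whose weighted
probability `P_E(L → C) = P(L → C)/(1 − P(L → [A]_E))` of reaching `C` is `q`. -/
def QTrans (E : Proc Chan → Proc Chan → Prop) (A : Proc Chan) (q : ℝ)
    (C : Set (Proc Chan)) : Prop :=
  ∃ t, IsETree E A t ∧ t.Regular ∧
    ∀ σ L p, t.node σ = some (L, p) → ¬ t.hasNode (0 :: σ) →
      ∃ (n : ℕ) (ps : Fin n → ℝ) (Ts : Fin n → Tm Chan), CStep L.val n ps Ts ∧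
        collProb C ps Ts / (1 - collProb (classOf E A) ps Ts) = q

/-- `E` is a branching bisimulation on `P_RCCS`: an equivalence such that
(1) ℓ-transitions with `ℓ ≠ τ ∨ C ≠ [A]_E` are bisimulated by all members of
`[A]_E`, and (2) likewise for `q`-transitions with `q ∈ (0,1]` and `C ≠ [A]_E`. -/
def IsBB (E : Proc Chan → Proc Chan → Prop) : Prop :=
  Equivalence E ∧
  (∀ A B l C, l.IsAct → IsClass E C → E A B → (l ≠ Lab.tau 1 ∨ C ≠ classOf E A) →
    LTrans E A l C → LTrans E B l C) ∧
  (∀ A B q C, 0 < q → q ≤ 1 → IsClass E C → E A B → C ≠ classOf E A →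
    QTrans E A q C → QTrans E B q C)

/-- `E` is a codivergent branching bisimulation on `P_RCCS`. -/
def IsCBB (E : Proc Chan → Proc Chan → Prop) : Prop := IsBB E ∧ Codivergent E

/-- `=_RCCS`, the largest codivergent branching bisimulation: the union of all
codivergent branching bisimulations. -/
def RccsEq (A B : Proc Chan) : Prop := ∃ E, IsCBB E ∧ E A B

/-! ### Concrete processes -/

/-- The empty nondeterministic choice `0`. -/
def Tm.nil : Tm Chan := .sum 0 Fin.elim0 Fin.elim0

/-- The prefix `α.T`. -/
def pfx (g : Chan ⊕ Chan) (T : Tm Chan) : Tm Chan := .sum 1 (fun _ => g) (fun _ => T)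

/-- The binary choice `α₁.T₁ + α₂.T₂`. -/
def sum2 (g₁ g₂ : Chan ⊕ Chan) (T₁ T₂ : Tm Chan) : Tm Chan := .sum 2 ![g₁, g₂] ![T₁, T₂]

/-- The binary random choice `pτ.T₁ ⊕ qτ.T₂`. -/
def rand2 (p q : ℝ) (T₁ T₂ : Tm Chan) : Tm Chan := .rand 2 ![p, q] ![T₁, T₂]

/-- `a.0`. -/
def aNil (a : Chan) : Tm Chan := pfx (Sum.inl a) Tm.nil

/-- `c̄.0`. -/
def coNil (c : Chan) : Tm Chan := pfx (Sum.inr c) Tm.nil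

/-- `Ω_{½a} = μX.(½τ.a.0 ⊕ ½τ.X)`. -/
def omegaHalfTm (a : Chan) : Tm Chan := .fix (rand2 (1/2) (1/2) (aNil a) (.var 0))

lemma omegaHalf_spec (a : Chan) : (omegaHalfTm a).ClosedAt 0 ∧ (omegaHalfTm a).WF := by
  refine ⟨?_, ?_⟩ <;>
    simp [omegaHalfTm, rand2, aNil, pfx, Tm.nil, Tm.ClosedAt, Tm.WF, Tm.Guarded,
      Fin.forall_fin_two, Fin.sum_univ_two] <;> norm_num

/-- `Ω_{½a}` as a process. -/
def omegaHalfP (a : Chan) : Proc Chan := ⟨omegaHalfTm a, omegaHalf_spec a⟩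

lemma aNil_spec (a : Chan) : (aNil a).ClosedAt 0 ∧ (aNil a).WF := by
  refine ⟨?_, ?_⟩ <;> simp [aNil, pfx, Tm.nil, Tm.ClosedAt, Tm.WF]

/-- `a.0` as a process. -/
def aNilP (a : Chan) : Proc Chan := ⟨aNil a, aNil_spec a⟩

section OmegaProof

lemma Proc.ext_val {A B : Proc Chan} (h : A.val = B.val) : A = B := Subtype.ext h

lemma inst_omega (a : Chan) :
    Tm.inst 0 (.fix (rand2 (1/2) (1/2) (aNil a) (.var 0))) (rand2 (1/2) (1/2) (aNil a) (.var 0))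
      = rand2 (1/2) (1/2) (aNil a) (omegaHalfTm a) := by
  simp only [rand2, Tm.inst]
  congr 1
  funext i
  fin_cases i
  · simp only [aNil, pfx, Tm.nil, Tm.inst]
    simp [Tm.inst]
    funext i
    first
      | exact i.elim0
      | (congr 1; funext j; exact j.elim0)
  · simp [Tm.inst, omegaHalfTm, rand2]

lemma cstep_omega_mk (a : Chan) :
    CStep (omegaHalfTm a) 2 ![1/2, 1/2] ![aNil a, omegaHalfTm a] := by
  refine CStep.fix ?_
  rw [inst_omega]
  exact CStep.rand

lemma step_omega_mk0 (a : Chan) : Step (omegaHalfTm a) (.tau (1/2)) (aNil a) := by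
  refine Step.fix ?_
  rw [inst_omega]
  exact Step.rand (p := ![1/2, 1/2]) (T := ![aNil a, omegaHalfTm a]) 0

lemma step_omega_mk1 (a : Chan) : Step (omegaHalfTm a) (.tau (1/2)) (omegaHalfTm a) := by
  refine Step.fix ?_
  rw [inst_omega]
  exact Step.rand (p := ![1/2, 1/2]) (T := ![aNil a, omegaHalfTm a]) 1

lemma step_omega {a : Chan} {l : Lab Chan} {T : Tm Chan} (h : Step (omegaHalfTm a) l T) :
    l = .tau (1/2) := by
  unfold omegaHalfTm at h
  cases h with
  | fix h =>
    rw [inst_omega] at h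
    unfold rand2 at h
    cases h with
    | rand i => fin_cases i <;> simp

lemma cstep_omega {a : Chan} {n : ℕ} {ps : Fin n → ℝ} {Ts : Fin n → Tm Chan}
    (h : CStep (omegaHalfTm a) n ps Ts) :
    ∃ hn : n = 2, ps = (fun i => ![1/2, 1/2] (Fin.cast hn i)) ∧
      Ts = fun i => ![aNil a, omegaHalfTm a] (Fin.cast hn i) := by
  unfold omegaHalfTm at h
  cases h with
  | fix h =>
    rw [inst_omega] at h
    unfold rand2 at h
    cases h with
    | rand => exact ⟨rfl, rfl, rfl⟩

lemma step_aNil {a : Chan} {l : Lab Chan} {T : Tm Chan} (h : Step (aNil a) l T) :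
    l = .name a := by
  unfold aNil pfx at h
  cases h with
  | sum i => rfl

lemma cstep_aNil {a : Chan} {n : ℕ} {ps : Fin n → ℝ} {Ts : Fin n → Tm Chan}
    (h : CStep (aNil a) n ps Ts) : False := by
  unfold aNil pfx at h
  cases h

/-- The relation. -/
def oRel (a : Chan) : Proc Chan → Proc Chan → Prop :=
  Relation.EqvGen fun x y : Proc Chan => x = omegaHalfP a ∧ y = aNilP a

lemma oRel_iff (a : Chan) (x y : Proc Chan) : oRel a x y ↔
    x = y ∨ ((x = omegaHalfP a ∨ x = aNilP a) ∧ (y = omegaHalfP a ∨ y = aNilP a)) := by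
  constructor
  · intro h
    induction h with
    | rel x y h => tauto
    | refl x => tauto
    | symm x y _ ih => rcases ih with h | h <;> [exact Or.inl h.symm; exact Or.inr h.symm]
    | trans x y z _ _ ih1 ih2 =>
      rcases ih1 with rfl | h1
      · exact ih2
      · rcases ih2 with rfl | h2
        · exact Or.inr h1
        · exact Or.inr ⟨h1.1, h2.2⟩
  · have hr : oRel a (omegaHalfP a) (aNilP a) := Relation.EqvGen.rel _ _ ⟨rfl, rfl⟩
    rintro (rfl | ⟨rfl | rfl, rfl | rfl⟩)
    · exact Relation.EqvGen.refl _
    · exact Relation.EqvGen.refl _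
    · exact hr
    · exact Relation.EqvGen.symm _ _ hr
    · exact Relation.EqvGen.refl _

/-- One-node tree. -/
def triv (A : Proc Chan) : PTree Chan where
  node
    | [] => some (A, 1)
    | _ :: _ => none

lemma triv_etree (E : Proc Chan → Proc Chan → Prop) (A : Proc Chan) (h : E A A) :
    IsETree E A (triv A) := by
  refine ⟨⟨rfl, ?_, ?_, ?_, ?_⟩, ?_, ?_, ?_⟩
  · intro i σ h; simp [PTree.hasNode, triv] at h
  · intro i j σ _ h; simp [PTree.hasNode, triv] at h
  · intro σ; exact ⟨0, fun i _ => by simp [PTree.hasNode, triv]⟩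
  · intro σ i B p B' p' _ h; simp [triv] at h
  · intro σ B p hn
    cases σ with
    | nil => simp [triv] at hn; rw [← hn.1]; exact h
    | cons i σ => simp [triv] at hn
  · intro σ i B p B' p' _ h; simp [triv] at h
  · intro σ i B p B' _ h; simp [triv] at h

lemma finBranch_of_rootLeaf (t : PTree Chan) (hs : ∀ i σ, t.hasNode (i :: σ) → t.hasNode σ)
    (hs2 : ∀ i j σ, j ≤ i → t.hasNode (i :: σ) → t.hasNode (j :: σ))
    (h : t.hasNode []) (h0 : ¬ t.hasNode [0]) (k : ℕ) : t.finBranchProb k = 1 := by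
  have key : ∀ σ, t.hasNode σ → σ = [] := by
    intro σ
    induction σ with
    | nil => simp
    | cons i σ ih =>
      intro hi
      have := ih (hs _ _ hi)
      subst this
      exact absurd (hs2 _ 0 _ (Nat.zero_le _) hi) h0
  unfold PTree.finBranchProb
  rw [tsum_eq_single []]
  · rw [if_pos ⟨⟨h, h0⟩, by simp⟩]; rfl
  · intro σ hσ
    rw [if_neg]
    rintro ⟨⟨h1, _⟩, _⟩
    exact hσ (key σ h1)

lemma triv_fin (A : Proc Chan) (k : ℕ) : (triv A).finBranchProb k = 1 := by
  have h := triv_etree (fun _ _ => True) A trivial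
  refine finBranch_of_rootLeaf _ h.1.2.1 h.1.2.2.1 ?_ ?_ k <;> simp [PTree.hasNode, triv]

lemma triv_regular (A : Proc Chan) : (triv A).Regular := by
  have : (triv A).finBranchProb = fun _ => 1 := funext (triv_fin A)
  unfold PTree.Regular
  rw [this]
  exact tendsto_const_nhds

lemma exists_leaf (t : PTree Chan) (h : t.Regular) : ∃ σ, t.IsLeaf σ := by
  by_contra hc
  push Not at hc
  have : t.finBranchProb = fun _ => 0 := by
    funext k
    unfold PTree.finBranchProb
    simp [hc]
  unfold PTree.Regular at h
  rw [this] at h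
  exact zero_ne_one (tendsto_nhds_unique tendsto_const_nhds h)

lemma exists_leaf' (t : PTree Chan) (h : t.Regular) :
    ∃ σ L p, t.node σ = some (L, p) ∧ ¬ t.hasNode (0 :: σ) := by
  obtain ⟨σ, h1, h2⟩ := exists_leaf t h
  obtain ⟨⟨L, p⟩, hx⟩ := Option.isSome_iff_exists.1 h1
  exact ⟨σ, L, p, hx, h2⟩

lemma level_finite {A : Proc Chan} {t : PTree Chan} (h : IsSilentTree A t) (k : ℕ) :
    {σ | t.hasNode σ ∧ σ.length = k}.Finite := by
  induction k with
  | zero =>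
    refine (Set.finite_singleton ([] : List ℕ)).subset ?_
    rintro σ ⟨_, h⟩
    simpa using h
  | succ k ih =>
    choose N hN using h.2.2.2.1
    refine (ih.biUnion (t := fun σ => (fun i => i :: σ) '' Set.Iio (N σ))
      (fun σ _ => (Set.finite_Iio _).image _)).subset ?_
    rintro σ ⟨h1, h2⟩
    cases σ with
    | nil => simp at h2
    | cons i σ =>
      simp only [Set.mem_iUnion]
      refine ⟨σ, ⟨h.2.1 _ _ h1, by simpa using h2⟩, i, ?_, rfl⟩
      by_contra hc
      exact hN σ i (by simpa using hc) h1

lemma pathProb_nonneg {A : Proc Chan} {t : PTree Chan} (h : IsSilentTree A t) (σ : List ℕ)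
    (hσ : t.hasNode σ) : 0 ≤ t.pathProb σ := by
  induction σ with
  | nil => simp [PTree.pathProb]
  | cons i σ ih =>
    have h1 := h.2.1 _ _ hσ
    obtain ⟨⟨B, p⟩, hB⟩ := Option.isSome_iff_exists.1 h1
    obtain ⟨⟨B', p'⟩, hB'⟩ := Option.isSome_iff_exists.1 hσ
    have := (h.2.2.2.2 _ _ _ _ _ _ hB hB').1
    refine mul_nonneg ?_ (ih h1)
    simp [PTree.edgeProb, hB', this.le]

lemma leaf_le {A : Proc Chan} {t : PTree Chan} (h : IsSilentTree A t) (σ : List ℕ)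
    (hσ : t.IsLeaf σ) (k : ℕ) (hk : σ.length ≤ k) : t.pathProb σ ≤ t.finBranchProb k := by
  have hfin : {σ | t.hasNode σ ∧ σ.length ≤ k}.Finite := by
    refine ((Set.finite_Iic k).biUnion (t := fun j => {σ | t.hasNode σ ∧ σ.length = j})
      (fun j _ => level_finite h j)).subset ?_
    rintro σ ⟨h1, h2⟩
    simp only [Set.mem_iUnion]
    exact ⟨σ.length, h2, h1, rfl⟩
  have hsum : Summable (fun σ : List ℕ =>
      if t.IsLeaf σ ∧ σ.length ≤ k then t.pathProb σ else 0) := by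
    refine summable_of_hasFiniteSupport (hfin.subset ?_)
    intro σ hs
    by_contra hc
    refine hs (if_neg ?_)
    rintro ⟨⟨h1, _⟩, h2⟩
    exact hc ⟨h1, h2⟩
  have := hsum.le_tsum σ (by
    intro j _
    split_ifs with hj
    · exact pathProb_nonneg h j hj.1.1
    · exact le_rfl)
  rw [if_pos ⟨hσ, hk⟩] at this
  exact this

lemma aNil_leaf {a : Chan} {A : Proc Chan} {t : PTree Chan} (h : IsSilentTree A t)
    (σ : List ℕ) (p : ℝ) (hσ : t.node σ = some (aNilP a, p)) : t.IsLeaf σ := by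
  refine ⟨by simp [PTree.hasNode, hσ], fun h0 => ?_⟩
  obtain ⟨⟨B', p'⟩, hB'⟩ := Option.isSome_iff_exists.1 h0
  have := step_aNil (h.2.2.2.2 _ _ _ _ _ _ hσ hB').2.2
  simp at this

lemma aNil_not_div (E : Proc Chan → Proc Chan → Prop) (a : Chan) :
    ¬ ∃ t, IsETree E (aNilP a) t ∧ t.Divergent := by
  rintro ⟨t, ht, hd⟩
  have hl := aNil_leaf ht.1 [] 1 ht.1.1
  have : t.finBranchProb = fun _ => 1 :=
    funext (finBranch_of_rootLeaf t ht.1.2.1 ht.1.2.2.1 hl.1 hl.2)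
  unfold PTree.Divergent at hd
  rw [this] at hd
  exact one_ne_zero (tendsto_nhds_unique tendsto_const_nhds hd)

lemma omega_not_div (E : Proc Chan → Proc Chan → Prop) (a : Chan) :
    ¬ ∃ t, IsETree E (omegaHalfP a) t ∧ t.Divergent := by
  rintro ⟨t, ht, hd⟩
  have hroot : t.hasNode [] := by simp [PTree.hasNode, ht.1.1]
  have : ∀ k, 1 ≤ k → 1/2 ≤ t.finBranchProb k := by
    intro k hk
    by_cases h0 : t.hasNode [0]
    · obtain ⟨⟨B', p'⟩, hB'⟩ := Option.isSome_iff_exists.1 h0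
      have hst := step_omega (ht.1.2.2.2.2 _ _ _ _ _ _ ht.1.1 hB').2.2
      have hp : p' = 1/2 := by simpa using hst
      obtain ⟨n, ps, Ts, hC, hn, hch⟩ := ht.2.2.1 _ _ _ _ _ _ ht.1.1 hB' (by rw [hp]; norm_num)
      obtain ⟨rfl, rfl, rfl⟩ := cstep_omega hC
      obtain ⟨C, hC1, hC2⟩ := hch 0
      have hCa : C = aNilP a := Proc.ext_val hC1
      subst hCa
      have hl := aNil_leaf ht.1 [0] _ hC2
      have := leaf_le ht.1 [0] hl k (by simpa using hk)
      refine le_trans (le_of_eq ?_) this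
      have hC3 : t.node [0] = some (aNilP a, 1/2) := hC2
      simp [PTree.pathProb, PTree.edgeProb, hC3]
    · rw [finBranch_of_rootLeaf t ht.1.2.1 ht.1.2.2.1 hroot h0]; norm_num
  have := ge_of_tendsto hd (Filter.eventually_atTop.2 ⟨1, this⟩)
  norm_num at this

/-- The all-ones address. -/
def IsOnes (σ : List ℕ) : Prop := ∀ i ∈ σ, i = 1

/-- The full tree of `Ω`. -/
def full (a : Chan) : PTree Chan where
  node
    | [] => some (omegaHalfP a, 1)
    | 0 :: σ => if IsOnes σ then some (aNilP a, 1/2) else none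
    | 1 :: σ => if IsOnes σ then some (omegaHalfP a, 1/2) else none
    | (_ + 2) :: _ => none

lemma full_cons {a : Chan} {i : ℕ} {σ : List ℕ} {B' : Proc Chan} {q : ℝ}
    (h : (full a).node (i :: σ) = some (B', q)) : IsOnes σ ∧ i < 2 ∧ q = 1/2 ∧
      B'.val = if i = 0 then aNil a else omegaHalfTm a := by
  match i, h with
  | 0, h =>
    simp only [full] at h
    split_ifs at h with h1
    simp only [Option.some.injEq, Prod.mk.injEq] at h
    rw [← h.1, ← h.2]; exact ⟨h1, by norm_num, rfl, rfl⟩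
  | 1, h =>
    simp only [full] at h
    split_ifs at h with h1
    simp only [Option.some.injEq, Prod.mk.injEq] at h
    rw [← h.1, ← h.2]; exact ⟨h1, by norm_num, rfl, rfl⟩
  | (_ + 2), h => simp [full] at h

lemma full_ones (a : Chan) {σ : List ℕ} (h : IsOnes σ) :
    ∃ p, (full a).node σ = some (omegaHalfP a, p) := by
  cases σ with
  | nil => exact ⟨1, rfl⟩
  | cons i σ =>
    obtain rfl : i = 1 := h i (by simp)
    refine ⟨1/2, ?_⟩
    have : IsOnes σ := fun j hj => h j (by simp [hj])
    simp [full, this]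

lemma full_hasNode_cons (a : Chan) (i : ℕ) (σ : List ℕ) :
    (full a).hasNode (i :: σ) ↔ IsOnes σ ∧ i < 2 := by
  constructor
  · intro h
    obtain ⟨⟨B', p'⟩, hB'⟩ := Option.isSome_iff_exists.1 h
    have := full_cons hB'
    tauto
  · rintro ⟨h, hi⟩
    interval_cases i <;> simp [PTree.hasNode, full, h]

lemma full_etree (a : Chan) : IsETree (oRel a) (omegaHalfP a) (full a) := by
  refine ⟨⟨rfl, ?_, ?_, ?_, ?_⟩, ?_, ?_, ?_⟩
  · intro i σ h
    obtain ⟨p, hp⟩ := full_ones a ((full_hasNode_cons a _ _).1 h).1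
    simp [PTree.hasNode, hp]
  · intro i j σ hj h
    rw [full_hasNode_cons] at *
    exact ⟨h.1, by omega⟩
  · intro σ
    refine ⟨2, fun i hi h => ?_⟩
    rw [full_hasNode_cons] at h
    omega
  · intro σ i B p B' p' h h'
    obtain ⟨h1, h2, rfl, h4⟩ := full_cons h'
    obtain ⟨p0, h5⟩ := full_ones a h1
    rw [h5] at h
    simp only [Option.some.injEq, Prod.mk.injEq] at h
    rw [← h.1, h4]
    refine ⟨by norm_num, by norm_num, ?_⟩
    split_ifs
    · exact step_omega_mk0 a
    · exact step_omega_mk1 a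
  · intro σ B p h
    rw [oRel_iff]
    cases σ with
    | nil => left; simp [full] at h; exact h.1
    | cons i σ =>
      right
      obtain ⟨h1, h2, rfl, h4⟩ := full_cons h
      refine ⟨Or.inl rfl, ?_⟩
      split_ifs at h4
      · right; exact Proc.ext_val h4
      · left; exact Proc.ext_val h4
  · intro σ i B p B' q h h' hq
    obtain ⟨h1, h2, rfl, h4⟩ := full_cons h'
    obtain ⟨p0, h5⟩ := full_ones a h1
    rw [h5] at h
    simp only [Option.some.injEq, Prod.mk.injEq] at h
    rw [← h.1]
    refine ⟨2, _, _, cstep_omega_mk a, ?_, ?_⟩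
    · intro j
      rw [full_hasNode_cons]; tauto
    · intro j
      fin_cases j
      · exact ⟨aNilP a, rfl, by simp [full, h1]⟩
      · exact ⟨omegaHalfP a, rfl, by simp [full, h1]⟩
  · intro σ i B p B' h h'
    obtain ⟨h1, h2, h3, h4⟩ := full_cons h'
    norm_num at h3

lemma isOnes_iff (σ : List ℕ) : IsOnes σ ↔ σ = List.replicate σ.length 1 := by
  rw [List.eq_replicate_iff]; simp [IsOnes]

lemma full_leaf_iff (a : Chan) (σ : List ℕ) :
    (full a).IsLeaf σ ↔ ∃ n, 0 :: List.replicate n 1 = σ := by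
  unfold PTree.IsLeaf
  constructor
  · rintro ⟨h1, h2⟩
    cases σ with
    | nil => exact absurd ((full_hasNode_cons a 0 []).2 ⟨by simp [IsOnes], by norm_num⟩) h2
    | cons i σ =>
      rw [full_hasNode_cons] at h1 h2
      have hi : i = 0 := by
        by_contra hi
        obtain rfl : i = 1 := by omega
        exact h2 ⟨by intro j hj; rcases List.mem_cons.1 hj with h | h <;> [exact h; exact h1.1 j h],
          by norm_num⟩
      subst hi
      exact ⟨σ.length, by rw [← (isOnes_iff σ).1 h1.1]⟩
  · rintro ⟨n, rfl⟩
    rw [full_hasNode_cons, full_hasNode_cons]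
    refine ⟨⟨by simp [IsOnes], by norm_num⟩, ?_⟩
    rintro ⟨h, _⟩
    have := h 0 (by simp)
    omega

lemma full_pathProb_ones (a : Chan) (n : ℕ) :
    (full a).pathProb (List.replicate n 1) = (1/2 : ℝ)^n := by
  induction n with
  | zero => simp [PTree.pathProb]
  | succ n ih =>
    rw [List.replicate_succ, PTree.pathProb, ih]
    have : IsOnes (List.replicate n 1) := by simp [IsOnes]
    simp [PTree.edgeProb, full, this, pow_succ]
    ring

lemma full_pathProb_leaf (a : Chan) (n : ℕ) :
    (full a).pathProb (0 :: List.replicate n 1) = (1/2 : ℝ)^(n+1) := by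
  rw [PTree.pathProb, full_pathProb_ones]
  have : IsOnes (List.replicate n 1) := by simp [IsOnes]
  simp [PTree.edgeProb, full, this, pow_succ]
  ring

lemma full_fin (a : Chan) (k : ℕ) : (full a).finBranchProb k = 1 - (1/2 : ℝ)^k := by
  have hinj : Function.Injective (fun n : ℕ => 0 :: List.replicate n 1) := by
    intro m n h
    have := congrArg List.length h
    simpa using this
  unfold PTree.finBranchProb
  rw [← hinj.tsum_eq]
  · rw [tsum_eq_sum (s := Finset.range k)]
    · have : ∀ n ∈ Finset.range k, (if (full a).IsLeaf (0 :: List.replicate n 1) ∧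
          (0 :: List.replicate n 1).length ≤ k then
          (full a).pathProb (0 :: List.replicate n 1) else 0) = (1/2 : ℝ)^(n+1) := by
        intro n hn
        rw [if_pos, full_pathProb_leaf]
        refine ⟨(full_leaf_iff a _).2 ⟨n, rfl⟩, ?_⟩
        have := Finset.mem_range.1 hn
        simp; omega
      rw [Finset.sum_congr rfl this]
      clear this
      induction k with
      | zero => simp
      | succ k ih => rw [Finset.sum_range_succ, ih]; ring
    · intro n hn
      rw [if_neg]
      rintro ⟨_, h⟩
      apply hn
      simp at h ⊢
      omega
  · intro σ hσ
    by_contra hc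
    refine hσ (if_neg ?_)
    rintro ⟨h, _⟩
    exact hc ((full_leaf_iff a σ).1 h)

lemma full_regular (a : Chan) : (full a).Regular := by
  have : (full a).finBranchProb = fun k => 1 - (1/2 : ℝ)^k := funext (full_fin a)
  unfold PTree.Regular
  rw [this]
  have := (tendsto_pow_atTop_nhds_zero_of_lt_one (r := (1/2 : ℝ)) (by norm_num)
    (by norm_num)).const_sub 1
  simpa using this

lemma lt_aux (a : Chan) {A B : Proc Chan} {l : Lab Chan} {C : Set (Proc Chan)} (hl : l.IsAct)
    (hA : A = omegaHalfP a ∨ A = aNilP a) (hB : B = omegaHalfP a ∨ B = aNilP a)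
    (h : LTrans (oRel a) A l C) : LTrans (oRel a) B l C := by
  obtain ⟨t, ht, hr, hlv⟩ := h
  obtain ⟨σ, L, p, h1, h2⟩ := exists_leaf' t hr
  obtain ⟨L', hL', hs⟩ := hlv σ L p h1 h2
  have hL : L = omegaHalfP a ∨ L = aNilP a := by
    rcases (oRel_iff a _ _).1 (ht.2.1 _ _ _ h1) with h | h
    · rw [← h]; exact hA
    · exact h.2
  rcases hL with rfl | rfl
  · have := step_omega hs
    subst this
    simp only [Lab.IsAct] at hl
    norm_num at hl
  · rcases hB with rfl | rfl
    · refine ⟨full a, full_etree a, full_regular a, ?_⟩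
      intro σ L p hσ h0
      obtain ⟨n, rfl⟩ := (full_leaf_iff a σ).1 ⟨by simp [PTree.hasNode, hσ], h0⟩
      obtain ⟨_, _, _, h4⟩ := full_cons hσ
      refine ⟨L', hL', ?_⟩
      rw [h4]
      exact hs
    · refine ⟨triv _, triv_etree _ _ (Relation.EqvGen.refl _), triv_regular _, ?_⟩
      intro σ L p hσ _
      cases σ with
      | nil =>
        simp [triv] at hσ
        rw [← hσ.1]
        exact ⟨L', hL', hs⟩
      | cons i σ => simp [triv] at hσ

lemma qt_aux (a : Chan) {A : Proc Chan} {q : ℝ} {C : Set (Proc Chan)} (hq : 0 < q)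
    (hA : A = omegaHalfP a ∨ A = aNilP a) (h : QTrans (oRel a) A q C) : False := by
  obtain ⟨t, ht, hr, hlv⟩ := h
  obtain ⟨σ, L, p, h1, h2⟩ := exists_leaf' t hr
  obtain ⟨n, ps, Ts, hc, hqe⟩ := hlv σ L p h1 h2
  have hL : L = omegaHalfP a ∨ L = aNilP a := by
    rcases (oRel_iff a _ _).1 (ht.2.1 _ _ _ h1) with h | h
    · rw [← h]; exact hA
    · exact h.2
  rcases hL with rfl | rfl
  · obtain ⟨rfl, rfl, rfl⟩ := cstep_omega hc
    have e1 : inC (classOf (oRel a) A) (aNil a) :=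
      ⟨aNilP a, (oRel_iff a _ _).2 (Or.inr ⟨hA, Or.inr rfl⟩), rfl⟩
    have e2 : inC (classOf (oRel a) A) (omegaHalfTm a) :=
      ⟨omegaHalfP a, (oRel_iff a _ _).2 (Or.inr ⟨hA, Or.inl rfl⟩), rfl⟩
    have : collProb (classOf (oRel a) A) (fun i : Fin 2 => ![(1/2 : ℝ), 1/2] (Fin.cast rfl i))
        (fun i : Fin 2 => ![aNil a, omegaHalfTm a] (Fin.cast rfl i)) = 1 := by
      simp [collProb, Fin.sum_univ_two, e1, e2]
      norm_num
    rw [this] at hqe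
    simp at hqe
    exact hq.ne hqe
  · exact cstep_aNil hc

lemma oRel_cbb (a : Chan) : IsCBB (oRel a) := by
  refine ⟨⟨Relation.EqvGen.is_equivalence _, ?_, ?_⟩, ?_⟩
  · intro A B l C hl _ hAB _ h
    rcases (oRel_iff a _ _).1 hAB with rfl | ⟨hA, hB⟩
    · exact h
    · exact lt_aux a hl hA hB h
  · intro A B q C hq _ _ hAB _ h
    rcases (oRel_iff a _ _).1 hAB with rfl | ⟨hA, hB⟩
    · exact h
    · exact (qt_aux a hq hA h).elim
  · intro A B hAB
    rcases (oRel_iff a _ _).1 hAB with rfl | ⟨hA, hB⟩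
    · rfl
    · have key : ∀ X, (X = omegaHalfP a ∨ X = aNilP a) →
          ¬ ∃ t, IsETree (oRel a) X t ∧ t.Divergent := by
        rintro X (rfl | rfl)
        · exact omega_not_div _ a
        · exact aNil_not_div _ a
      exact iff_of_false (key A hA) (key B hB)

end OmegaProof

/-- The equivalence closure of the single pair
`{(Ω_{½a}, a.0)}` is a codivergent branching bisimulation on `P_RCCS`; in
particular `Ω_{½a} =_RCCS a.0`. -/
theorem omegaHalf_eq_aNil {Chan : Type} (a : Chan) :
    IsCBB (Relation.EqvGen fun x y : Proc Chan => x = omegaHalfP a ∧ y = aNilP a) ∧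
    RccsEq (omegaHalfP a) (aNilP a) := by
  exact ⟨oRel_cbb a, _, oRel_cbb a, Relation.EqvGen.rel _ _ ⟨rfl, rfl⟩⟩
end
end

section
/- Let a be a channel, let Ω_a = μX.(τ.a.0 + τ.X), where τ.T + τ.T' abbreviates (c)(c̄.0 | (c.T + c.T')) for a fresh channel c, and let Ω_{½a} = μX.(½τ.a.0 ⊕ ½τ.X). Then no codivergent branching bisimulation on P_RCCS relates Ω_a and Ω_{½a}; in particular Ω_a ≠_RCCS Ω_{½a}. -/
/-!
Formalization of RCCS (Randomized CCS) following the paper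
"A Uniform Framework for Probabilistic Process Models".
Channels form a type `Chan`; terms use de Bruijn indices for process variables.
-/

noncomputable section
open scoped Classical

variable {Chan : Type}

/-- `τ.T + τ.T'`, the abbreviation `(c)(c̄.0 | (c.T + c.T'))` for a fresh `c`. -/
def tauPlusTau (c : Chan) (T T' : Tm Chan) : Tm Chan :=
  .loc c (.par (coNil c) (sum2 (Sum.inl c) (Sum.inl c) T T'))

/-- `Ω_a = μX.(τ.a.0 + τ.X)`. -/
def omegaATm (a c : Chan) : Tm Chan := .fix (tauPlusTau c (aNil a) (.var 0))

lemma omegaATm_spec (a c : Chan) : (omegaATm a c).ClosedAt 0 ∧ (omegaATm a c).WF := by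
  refine ⟨?_, ?_⟩ <;>
    simp [omegaATm, tauPlusTau, sum2, coNil, aNil, pfx, Tm.nil, Tm.ClosedAt, Tm.WF, Tm.Guarded,
      Fin.forall_fin_two]

def omegaAP (a c : Chan) : Proc Chan := ⟨omegaATm a c, omegaATm_spec a c⟩

namespace OmegaAux

lemma inst_nil (k : ℕ) (S : Tm Chan) : Tm.inst k S (Tm.nil : Tm Chan) = Tm.nil := by
  simp only [Tm.nil, Tm.inst]
  congr 1
  funext i
  exact i.elim0

lemma inst_pfx (k : ℕ) (S : Tm Chan) (g : Chan ⊕ Chan) :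
    Tm.inst k S (pfx g Tm.nil) = pfx g Tm.nil := by
  simp only [pfx, Tm.inst, inst_nil]

lemma inst_half (a : Chan) :
    Tm.inst 0 (omegaHalfTm a) (rand2 (1/2) (1/2) (aNil a) (.var 0)) =
      rand2 (1/2) (1/2) (aNil a) (omegaHalfTm a) := by
  simp only [rand2, Tm.inst]
  congr 1
  funext i
  fin_cases i
  · exact inst_pfx _ _ _
  · simp [Tm.inst]

lemma inst_omegaA (a c : Chan) :
    Tm.inst 0 (omegaATm a c) (tauPlusTau c (aNil a) (.var 0)) =
      tauPlusTau c (aNil a) (omegaATm a c) := by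
  simp only [tauPlusTau, Tm.inst, coNil, inst_pfx, sum2]
  congr 3
  funext i
  fin_cases i
  · exact inst_pfx _ _ _
  · simp [Tm.inst]

lemma half_step {a : Chan} {q : ℝ} {T : Tm Chan} (h : Step (omegaHalfTm a) (.tau q) T) :
    q = 1/2 ∧ (T = aNil a ∨ T = omegaHalfTm a) := by
  have h2 : Step (rand2 (1/2) (1/2) (aNil a) (omegaHalfTm a)) (.tau q) T := by
    unfold omegaHalfTm at h
    cases h with
    | fix h => rw [← inst_half]; exact h
  unfold rand2 at h2
  generalize hl : Lab.tau q = l at h2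
  cases h2 with
  | rand i =>
    fin_cases i <;> simp at hl <;> simp [hl]

lemma half_cstep {a : Chan} {n : ℕ} {ps : Fin n → ℝ} {Ts : Fin n → Tm Chan}
    (h : CStep (omegaHalfTm a) n ps Ts) :
    ∃ i : Fin n, (i : ℕ) = 0 ∧ ps i = 1/2 ∧ Ts i = aNil a := by
  have h2 : CStep (rand2 (1/2) (1/2) (aNil a) (omegaHalfTm a)) n ps Ts := by
    unfold omegaHalfTm at h
    cases h with
    | fix h => rw [← inst_half]; exact h
  unfold rand2 at h2
  cases h2 with
  | rand => exact ⟨0, by simp⟩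

lemma aNil_no_tau {a : Chan} {q : ℝ} {T : Tm Chan} (h : Step (aNil a) (.tau q) T) : False := by
  unfold aNil pfx at h
  generalize hl : Lab.tau q = l at h
  cases h with
  | sum i => simp [guardLab] at hl

/-- the wrapper `(c)(0 | T)` -/
def wrap (c : Chan) (T : Proc Chan) : Proc Chan :=
  ⟨.loc c (.par Tm.nil T.val), by
    obtain ⟨T, h1, h2⟩ := T
    refine ⟨?_, ?_⟩ <;> simp [Tm.ClosedAt, Tm.WF, Tm.nil, h1, h2]⟩

/-- iterated wrapper around `Ω_a` -/
def AP (a c : Chan) : ℕ → Proc Chan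
  | 0 => omegaAP a c
  | n + 1 => wrap c (AP a c n)

lemma AP_step (a c : Chan) (n : ℕ) :
    Step (AP a c n).val (.tau 1) (AP a c (n + 1)).val := by
  induction n with
  | zero =>
    change Step (.fix (tauPlusTau c (aNil a) (.var 0))) (.tau 1)
      (.loc c (.par Tm.nil (omegaATm a c)))
    refine Step.fix ?_
    have := inst_omegaA a c
    unfold omegaATm at this ⊢
    rw [this]
    refine Step.loc c ?_ (by simp) (by simp)
    exact Step.comR (a := c) (Step.sum (α := fun _ => Sum.inr c) (T := fun _ => Tm.nil) (0 : Fin 1))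
      (Step.sum (α := ![Sum.inl c, Sum.inl c]) (T := ![_, _]) (1 : Fin 2))
  | succ n ih =>
    refine Step.loc c ?_ (by simp) (by simp)
    exact Step.parR ih

/-- one-node tree -/
def triv (A : Proc Chan) : PTree Chan := ⟨fun σ => if σ = [] then some (A, 1) else none⟩

lemma triv_isE {E : Proc Chan → Proc Chan → Prop} (hE : Equivalence E) (A : Proc Chan) :
    IsETree E A (triv A) := by
  refine ⟨⟨?_, ?_, ?_, ?_, ?_⟩, ?_, ?_, ?_⟩
  · simp [triv]
  · simp [triv, PTree.hasNode]
  · simp [triv, PTree.hasNode]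
  · simp [triv, PTree.hasNode]
  · simp [triv]
  · intro σ B p h
    by_cases hs : σ = []
    · simp [triv, hs] at h
      rw [← h.1]; exact hE.refl _
    · simp [triv, hs] at h
  · simp [triv]
  · simp [triv]

lemma triv_regular (A : Proc Chan) : (triv A).Regular := by
  have : (triv A).finBranchProb = fun _ => 1 := by
    funext k
    unfold PTree.finBranchProb
    rw [tsum_eq_single []]
    · simp [PTree.IsLeaf, PTree.hasNode, triv, PTree.pathProb]
    · intro σ hσ
      simp [PTree.IsLeaf, PTree.hasNode, triv, hσ]
  unfold PTree.Regular
  rw [this]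
  exact tendsto_const_nhds

/-- the infinite path -/
def spine (a c : Chan) : PTree Chan :=
  ⟨fun σ => if ∀ x ∈ σ, x = 0 then some (AP a c σ.length, 1) else none⟩

lemma spine_isE {E : Proc Chan → Proc Chan → Prop} (a c : Chan)
    (h : ∀ n, E (omegaAP a c) (AP a c n)) : IsETree E (omegaAP a c) (spine a c) := by
  have key : ∀ σ i B p B' p', (spine a c).node σ = some (B, p) →
      (spine a c).node (i :: σ) = some (B', p') →
      p' = 1 ∧ i = 0 ∧ Step B.val (.tau 1) B'.val := by
    intro σ i B p B' p' h1 h2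
    simp only [spine] at h1 h2
    split_ifs at h1 with c1
    split_ifs at h2 with c2
    simp only [Option.some.injEq, Prod.mk.injEq] at h1 h2
    refine ⟨h2.2.symm, c2 i (by simp), ?_⟩
    rw [← h1.1, ← h2.1]
    exact AP_step a c σ.length
  refine ⟨⟨?_, ?_, ?_, ?_, ?_⟩, ?_, ?_, ?_⟩
  · simp [spine, AP]
  · intro i σ
    simp [spine, PTree.hasNode]
  · intro i j σ hj
    simp [spine, PTree.hasNode]
    intro hi hh
    exact ⟨by omega, hh⟩
  · intro σ
    refine ⟨1, fun i hi => ?_⟩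
    simp [spine, PTree.hasNode]
    intro h0
    omega
  · intro σ i B p B' p' h1 h2
    obtain ⟨r1, r2, r3⟩ := key σ i B p B' p' h1 h2
    subst r1
    exact ⟨one_pos, le_refl _, r3⟩
  · intro σ B p h1
    simp only [spine] at h1
    split_ifs at h1 with c1
    simp only [Option.some.injEq, Prod.mk.injEq] at h1
    rw [← h1.1]
    exact h _
  · intro σ i B p B' q h1 h2 hq
    obtain ⟨r1, r2, r3⟩ := key σ i B p B' q h1 h2
    linarith
  · intro σ i B p B' h1 h2
    obtain ⟨r1, r2, r3⟩ := key σ i B p B' 1 h1 h2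
    refine ⟨r3, r2, ?_⟩
    simp [spine, PTree.hasNode]

lemma no_leaf_prob {t : PTree Chan} (h : ∀ σ, ¬ t.IsLeaf σ) : t.finBranchProb = fun _ => 0 := by
  funext k
  unfold PTree.finBranchProb
  simp [h]

lemma spine_div (a c : Chan) : (spine a c).Divergent := by
  unfold PTree.Divergent
  rw [no_leaf_prob]
  · exact tendsto_const_nhds
  · rintro σ ⟨h1, h2⟩
    simp [spine, PTree.hasNode] at h1 h2
    obtain ⟨x, hx, hx0⟩ := h2
    exact hx0 (h1 x hx)

lemma half_nodes {E : Proc Chan → Proc Chan → Prop} {a : Chan} {t : PTree Chan}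
    (ht : IsETree E (omegaHalfP a) t) : ∀ σ B p, t.node σ = some (B, p) →
      B.val = aNil a ∨ B.val = omegaHalfTm a := by
  intro σ
  induction σ with
  | nil =>
    intro B p h
    rw [ht.1.1] at h
    simp only [Option.some.injEq, Prod.mk.injEq] at h
    right
    rw [← h.1]; rfl
  | cons i σ ih =>
    intro B p h
    have hn : t.hasNode σ := ht.1.2.1 i σ (by simp [PTree.hasNode, h])
    obtain ⟨⟨D, q⟩, hD⟩ := Option.isSome_iff_exists.1 hn
    have hs := (ht.1.2.2.2.2 σ i D q B p hD h).2.2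
    rcases ih D q hD with h1 | h1
    · rw [h1] at hs; exact (aNil_no_tau hs).elim
    · rw [h1] at hs; exact (half_step hs).2

lemma finite_nodes {A : Proc Chan} {t : PTree Chan} (ht : IsSilentTree A t) (k : ℕ) :
    {σ : List ℕ | t.hasNode σ ∧ σ.length = k}.Finite := by
  induction k with
  | zero =>
    refine (Set.finite_singleton ([] : List ℕ)).subset ?_
    rintro σ ⟨_, h⟩
    simpa using h
  | succ k ih =>
    choose f hf using ht.2.2.2.1
    refine (ih.biUnion (t := fun σ => (fun i => i :: σ) '' Set.Iio (f σ))
      (fun σ _ => (Set.finite_Iio _).image _)).subset ?_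
    rintro σ ⟨h1, h2⟩
    cases σ with
    | nil => simp at h2
    | cons i σ =>
      simp only [Set.mem_iUnion]
      refine ⟨σ, ⟨ht.2.1 i σ h1, by simpa using h2⟩, i, ?_, rfl⟩
      by_contra hh
      exact hf σ i (by simpa using hh) h1

lemma pathProb_nonneg {A : Proc Chan} {t : PTree Chan} (ht : IsSilentTree A t) (σ : List ℕ)
    (h : t.hasNode σ) : 0 ≤ t.pathProb σ := by
  induction σ with
  | nil => simp [PTree.pathProb]
  | cons i σ ih =>
    have hn : t.hasNode σ := ht.2.1 i σ h
    obtain ⟨⟨D, q⟩, hD⟩ := Option.isSome_iff_exists.1 hn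
    obtain ⟨⟨B, p⟩, hB⟩ := Option.isSome_iff_exists.1 h
    have := (ht.2.2.2.2 σ i D q B p hD hB).1
    unfold PTree.pathProb
    refine mul_nonneg ?_ (ih hn)
    simp [PTree.edgeProb, hB, this.le]

lemma leaf_le {A : Proc Chan} {t : PTree Chan} (ht : IsSilentTree A t) (σ : List ℕ)
    (h : t.IsLeaf σ) (k : ℕ) (hk : σ.length ≤ k) : t.pathProb σ ≤ t.finBranchProb k := by
  have hfin : {σ : List ℕ | t.hasNode σ ∧ σ.length ≤ k}.Finite := by
    refine ((Set.finite_Iic k).biUnion (t := fun j => {σ : List ℕ | t.hasNode σ ∧ σ.length = j})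
      (fun j _ => finite_nodes ht j)).subset ?_
    rintro σ ⟨h1, h2⟩
    simp only [Set.mem_iUnion]
    exact ⟨σ.length, h2, h1, rfl⟩
  unfold PTree.finBranchProb
  have hs : Summable fun σ : List ℕ =>
      if t.IsLeaf σ ∧ σ.length ≤ k then t.pathProb σ else 0 := by
    refine summable_of_hasFiniteSupport (hfin.subset ?_)
    intro τ hτ
    by_contra hc
    apply hτ
    refine if_neg ?_
    rintro ⟨h1, h2⟩
    exact hc ⟨h1.1, h2⟩
  have := hs.le_tsum σ (fun τ _ => by
    split_ifs with hh
    · exact pathProb_nonneg ht τ hh.1.1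
    · exact le_refl _)
  rwa [if_pos ⟨h, hk⟩] at this

lemma half_not_div {E : Proc Chan → Proc Chan → Prop} {a : Chan} {t : PTree Chan}
    (ht : IsETree E (omegaHalfP a) t) : ¬ t.Divergent := by
  have key : ∃ σ, t.IsLeaf σ ∧ 1/2 ≤ t.pathProb σ := by
    by_cases h0 : t.hasNode [0]
    · obtain ⟨⟨B, q⟩, hB⟩ := Option.isSome_iff_exists.1 h0
      have hs := half_step (ht.1.2.2.2.2 [] 0 _ _ B q ht.1.1 hB).2.2
      obtain ⟨n, ps, Ts, hc, _, hch⟩ := ht.2.2.1 [] 0 _ _ B q ht.1.1 hB (by rw [hs.1]; norm_num)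
      obtain ⟨i, hi, hp, hT⟩ := half_cstep hc
      obtain ⟨D, hD, hn⟩ := hch i
      rw [hi, hp] at hn
      rw [hT] at hD
      refine ⟨[0], ⟨h0, ?_⟩, ?_⟩
      · intro h00
        obtain ⟨⟨F, r⟩, hF⟩ := Option.isSome_iff_exists.1 h00
        have := (ht.1.2.2.2.2 [0] 0 _ _ F r hn hF).2.2
        rw [hD] at this
        exact aNil_no_tau this
      · simp [PTree.pathProb, PTree.edgeProb, hn]
    · refine ⟨[], ⟨?_, h0⟩, ?_⟩
      · simp [PTree.hasNode, ht.1.1]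
      · simp [PTree.pathProb]; norm_num
  obtain ⟨σ, hl, hp⟩ := key
  intro hd
  have : (1/2 : ℝ) ≤ 0 := by
    refine ge_of_tendsto hd ?_
    filter_upwards [Filter.eventually_ge_atTop σ.length] with k hk
    exact hp.trans (leaf_le ht.1 σ hl k hk)
  norm_num at this

lemma half_no_tau {E : Proc Chan → Proc Chan → Prop} {a : Chan} {C : Set (Proc Chan)}
    (h : LTrans E (omegaHalfP a) (.tau 1) C) : False := by
  obtain ⟨t, ht, hr, hl⟩ := h
  have : ∃ σ, t.IsLeaf σ := by
    by_contra! hn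
    unfold PTree.Regular at hr
    rw [no_leaf_prob hn] at hr
    have := tendsto_nhds_unique hr tendsto_const_nhds
    norm_num at this
  obtain ⟨σ, h1, h2⟩ := this
  obtain ⟨⟨B, q⟩, hB⟩ := Option.isSome_iff_exists.1 h1
  obtain ⟨L, _, hs⟩ := hl σ B q hB h2
  rcases half_nodes ht σ B q hB with h | h
  · rw [h] at hs; exact aNil_no_tau hs
  · rw [h] at hs
    have := (half_step hs).1
    norm_num at this

lemma main {E : Proc Chan → Proc Chan → Prop} (a c : Chan) (hE : IsCBB E) :
    ¬ E (omegaAP a c) (omegaHalfP a) := by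
  intro h
  obtain ⟨⟨heq, hL, _⟩, hcd⟩ := hE
  have hall : ∀ n, E (omegaAP a c) (AP a c n) := by
    intro n
    induction n with
    | zero => exact heq.refl _
    | succ n ih =>
      by_contra hne
      refine half_no_tau (hL (AP a c n) (omegaHalfP a) (.tau 1) (classOf E (AP a c (n + 1)))
        rfl ⟨_, rfl⟩ (heq.trans (heq.symm ih) h) (Or.inr ?_) ?_)
      · intro hc
        have : AP a c (n + 1) ∈ classOf E (AP a c n) := by
          rw [← hc]; exact heq.refl _
        exact hne (heq.trans ih this)
      · refine ⟨triv _, triv_isE heq _, triv_regular _, ?_⟩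
        intro σ L p hn _
        refine ⟨AP a c (n + 1), heq.refl _, ?_⟩
        by_cases hs : σ = []
        · simp [triv, hs] at hn
          rw [← hn.1]; exact AP_step a c n
        · simp [triv, hs] at hn
  obtain ⟨t, ht, hd⟩ := (hcd _ _ h).1 ⟨_, spine_isE a c hall, spine_div a c⟩
  exact half_not_div ht hd

end OmegaAux

/-- For a fresh channel `c ≠ a`, no codivergent branching
bisimulation on `P_RCCS` relates `Ω_a = μX.(τ.a.0 + τ.X)` and
`Ω_{½a} = μX.(½τ.a.0 ⊕ ½τ.X)`; in particular `Ω_a ≠_RCCS Ω_{½a}`. -/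
theorem omegaA_ne_omegaHalf {Chan : Type} (a c : Chan) (hfresh : c ≠ a) :
    (∀ E : Proc Chan → Proc Chan → Prop, IsCBB E → ¬ E (omegaAP a c) (omegaHalfP a)) ∧
    ¬ RccsEq (omegaAP a c) (omegaHalfP a) := by
  exact ⟨fun E hE => OmegaAux.main a c hE, fun ⟨_, hE, h⟩ => OmegaAux.main a c hE h⟩
end
end
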